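/- arXiv:2009.02896 — 4 statements merged into one kernel-verified Lean document; each statement's English description precedes it below -/
import Mathlib

section
/- Let d ≥ 1 be an integer and let s, s₁, s₂ be real numbers with s₁, s₂ ≥ 0, 0 ≤ s ≤ min(s₁, s₂), and s < s₁ + s₂ − d/2. Then there exists a constant C = C(s, s₁, s₂, d) > 0 such that for all u : ℤ^d → ℂ with ‖u‖_{ℓ²_{s₁}} < ∞ and v : ℤ^d → ℂ with ‖v‖_{ℓ²_{s₂}} < ∞, the convolution series (u*v)(n) = Σ_{m ∈ ℤ^d} u(n − m) v(m) converges absolutely for each n, and ‖u*v‖_{ℓ²_s} ≤ C ‖u‖_{ℓ²_{s₁}} ‖v‖_{ℓ²_{s₂}}. -/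
/-- Euclidean norm of a lattice point `n ∈ ℤ^d`, viewed as a vector in `ℝ^d`. -/
noncomputable def latNorm {d : ℕ} (n : Fin d → ℤ) : ℝ :=
  Real.sqrt (∑ i, ((n i : ℝ)) ^ 2)

/-!
Write `τ = 2s - 2s₁ - 2s₂`. If `ω > 0` is subadditive, then `ω n ≤ ω (n - m) + ω m` is at most twice
the larger term. As `s ≤ s₁, s₂`, the surplus power `2s - 2s₁` or `2s - 2s₂` of the larger term is
nonpositive, hence bounded by the same power of the smaller term, which gives
`ω n ^ (2s) ≤ 2 ^ (2s) * (ω (n - m) ^ τ + ω m ^ τ) * ω (n - m) ^ (2s₁) * ω m ^ (2s₂)`.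
The kernel `ω (n - m) ^ τ + ω m ^ τ` is summable over `m`, uniformly in `n`, so Cauchy–Schwarz
in `m` bounds `ω n ^ (2s) * ‖(u * v) n‖²` by a constant times the convolution of
`ω ^ (2s₁) * ‖u‖²` and `ω ^ (2s₂) * ‖v‖²` at `n`, whose total mass is the product of the two masses.
On `ℤ^d` with `ω n = 1 + |n|`, summability of `ω ^ τ` is the condition `τ < -d`.
-/

theorem summable_and_sq_tsum_le_of_sq_le_mul {ι : Type*} {r f g : ι → ℝ} (hf : ∀ i, 0 ≤ f i)
    (hg : ∀ i, 0 ≤ g i) (hfs : Summable f) (hgs : Summable g) (h : ∀ i, r i ^ 2 ≤ f i * g i) :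
    Summable r ∧ (∑' i, r i) ^ 2 ≤ (∑' i, f i) * ∑' i, g i := by
  have hrs : Summable r := by
    refine (hfs.add hgs).of_norm_bounded fun i => abs_le_of_sq_le_sq ?_ (add_nonneg (hf i) (hg i))
    nlinarith [h i, hf i, hg i, mul_nonneg (hf i) (hg i)]
  refine ⟨hrs, le_of_tendsto_of_tendsto' (Filter.Tendsto.pow hrs.hasSum 2)
    (Filter.Tendsto.mul hfs.hasSum hgs.hasSum) fun S => ?_⟩
  exact S.sum_sq_le_sum_mul_sum_of_sq_le_mul (fun i _ => hf i) (fun i _ => hg i)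
    fun i _ => h i

section Peetre

variable {a b c s s₁ s₂ : ℝ}

theorem rpow_le_mul_rpow_mul_of_le_add_of_le (hb : 0 < b) (hba : b ≤ a) (hc : 0 ≤ c)
    (hcab : c ≤ a + b) (hs : 0 ≤ s) (hs₁ : s ≤ s₁) :
    c ^ s ≤ 2 ^ s * b ^ (s - s₁ - s₂) * (a ^ s₁ * b ^ s₂) := by
  have ha : 0 < a := hb.trans_le hba
  calc c ^ s ≤ (2 * a) ^ s := Real.rpow_le_rpow hc (by linarith) hs
    _ = 2 ^ s * (a ^ (s - s₁) * a ^ s₁) := by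
        rw [Real.mul_rpow zero_le_two ha.le, ← Real.rpow_add ha, sub_add_cancel]
    _ ≤ 2 ^ s * (b ^ (s - s₁) * a ^ s₁) := by
        gcongr 2 ^ s * (?_ * _)
        exact Real.rpow_le_rpow_of_nonpos hb hba (sub_nonpos.2 hs₁)
    _ = 2 ^ s * b ^ (s - s₁ - s₂) * (a ^ s₁ * b ^ s₂) := by
        rw [← sub_add_cancel (s - s₁) s₂, Real.rpow_add hb, sub_add_cancel]
        ring

theorem rpow_le_mul_rpow_add_mul_of_le_add (ha : 0 < a) (hb : 0 < b) (hc : 0 ≤ c) (hcab : c ≤ a + b)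
    (hs : 0 ≤ s) (hs₁ : s ≤ s₁) (hs₂ : s ≤ s₂) :
    c ^ s ≤ 2 ^ s * (a ^ (s - s₁ - s₂) + b ^ (s - s₁ - s₂)) * (a ^ s₁ * b ^ s₂) := by
  rcases le_total b a with hba | hab
  · refine (rpow_le_mul_rpow_mul_of_le_add_of_le (s₂ := s₂) hb hba hc hcab hs hs₁).trans ?_
    gcongr
    exact le_add_of_nonneg_left (by positivity)
  · have hcba : c ≤ b + a := add_comm a b ▸ hcab
    refine (rpow_le_mul_rpow_mul_of_le_add_of_le (s₂ := s₁) ha hab hc hcba hs hs₂).trans ?_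
    rw [sub_right_comm s s₂ s₁, mul_comm (b ^ s₂)]
    gcongr
    exact le_add_of_nonneg_right (by positivity)

end Peetre

/-- The convolution of two functions on an additive group, in the order `u (n - m) * v m`. As with
any `tsum`, its value is meaningful only at those `n` where the series converges. -/
noncomputable def discreteConv {G R : Type*} [AddGroup G] [NonUnitalNonAssocSemiring R]
    [TopologicalSpace R] (u v : G → R) (n : G) : R :=
  ∑' m, u (n - m) * v m

theorem summable_and_hasSum_discreteConv {G R : Type*} [AddGroup G] [NormedRing R]
    [CompleteSpace R] {f g : G → R} (hf : Summable fun n => ‖f n‖) (hg : Summable fun n => ‖g n‖) :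
    (∀ n, Summable fun m => f (n - m) * g m) ∧
      HasSum (discreteConv f g) ((∑' n, f n) * ∑' n, g n) := by
  let shear : G × G ≃ G × G :=
    (Equiv.prodComm G G).trans <|
      ((Equiv.refl G).prodShear Equiv.subRight).trans (Equiv.prodComm G G)
  have hmul : HasSum (fun p : G × G => f p.1 * g p.2) ((∑' n, f n) * ∑' n, g n) :=
    hf.of_norm.hasSum.mul hg.of_norm.hasSum (summable_mul_of_summable_norm hf hg)
  have hfg : HasSum (fun p : G × G => f (p.1 - p.2) * g p.2) ((∑' n, f n) * ∑' n, g n) :=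
    shear.hasSum_iff.2 hmul
  have hrow (n : G) : Summable fun m => f (n - m) * g m := hfg.summable.prod_factor n
  exact ⟨hrow, hfg.prod_fiberwise fun n => (hrow n).hasSum⟩

section WeightedL2

/-- Membership in the weighted `ℓ²` space. The weight multiplies `‖u n‖ ^ 2`, so that `ℓ²_s` is the
case `w n = (1 + |n|) ^ (2 * s)`. -/
def MemWeightedL2 {G E : Type*} [Norm E] (w : G → ℝ) (u : G → E) : Prop :=
  Summable fun n => w n * ‖u n‖ ^ 2

/-- The weighted `ℓ²` norm, with the same normalization of the weight as in `MemWeightedL2`. It is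
meaningful only when `MemWeightedL2 w u` holds. -/
noncomputable def weightedL2Norm {G E : Type*} [Norm E] (w : G → ℝ) (u : G → E) : ℝ :=
  √(∑' n, w n * ‖u n‖ ^ 2)

variable {G R : Type*} [AddGroup G] [NonUnitalNormedRing R] [CompleteSpace R]
  {w w₁ w₂ : G → ℝ} {u v : G → R}

theorem summable_norm_and_mul_norm_discreteConv_sq_le {c : ℝ} {k : G → ℝ} {n : G} (hc : 0 < c)
    (hw₁ : ∀ n, 0 ≤ w₁ n) (hw₂ : ∀ n, 0 ≤ w₂ n) (hk : Summable k)
    (hck : ∀ m, c ≤ k m * (w₁ (n - m) * w₂ m))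
    (huv : Summable fun m => w₁ (n - m) * ‖u (n - m)‖ ^ 2 * (w₂ m * ‖v m‖ ^ 2)) :
    (Summable fun m => ‖u (n - m) * v m‖) ∧
      c * ‖discreteConv u v n‖ ^ 2 ≤
        (∑' m, k m) * discreteConv (fun m => w₁ m * ‖u m‖ ^ 2) (fun m => w₂ m * ‖v m‖ ^ 2) n := by
  set F : G → ℝ := fun m => w₁ (n - m) * ‖u (n - m)‖ ^ 2 * (w₂ m * ‖v m‖ ^ 2) with hF
  have hF_nonneg (m : G) : 0 ≤ F m :=
    mul_nonneg (mul_nonneg (hw₁ _) (sq_nonneg _)) (mul_nonneg (hw₂ _) (sq_nonneg _))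
  have hk_nonneg (m : G) : 0 ≤ k m :=
    (pos_of_mul_pos_left (hc.trans_le (hck m)) (mul_nonneg (hw₁ _) (hw₂ m))).le
  have hterm (m : G) : ‖u (n - m) * v m‖ ^ 2 ≤ k m * (c⁻¹ * F m) := by
    rw [mul_left_comm, le_inv_mul_iff₀ hc]
    calc c * ‖u (n - m) * v m‖ ^ 2
        ≤ k m * (w₁ (n - m) * w₂ m) * (‖u (n - m)‖ * ‖v m‖) ^ 2 := by
          gcongr
          exacts [hc.le.trans (hck m), hck m, norm_mul_le _ _]
      _ = k m * F m := by rw [hF]; ring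
  obtain ⟨habs, hsq⟩ := summable_and_sq_tsum_le_of_sq_le_mul hk_nonneg
    (fun m => mul_nonneg (inv_nonneg.2 hc.le) (hF_nonneg m)) hk (huv.mul_left c⁻¹) hterm
  refine ⟨habs, ?_⟩
  have hnorm : ‖discreteConv u v n‖ ≤ ∑' m, ‖u (n - m) * v m‖ :=
    habs.of_norm.hasSum.norm_le_of_bounded habs.hasSum fun _ => le_rfl
  rw [tsum_mul_left, mul_left_comm, le_inv_mul_iff₀ hc] at hsq
  exact (mul_le_mul_of_nonneg_left (pow_le_pow_left₀ (norm_nonneg _) hnorm 2) hc.le).trans hsq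

theorem MemWeightedL2.discreteConv_of_kernel {κ : G → G → ℝ} {M : ℝ} (hw : ∀ n, 0 < w n)
    (hw₁ : ∀ n, 0 ≤ w₁ n) (hw₂ : ∀ n, 0 ≤ w₂ n) (hκ : ∀ n, Summable (κ n))
    (hκM : ∀ n, ∑' m, κ n m ≤ M) (hwκ : ∀ n m, w n ≤ κ n m * (w₁ (n - m) * w₂ m))
    (hu : MemWeightedL2 w₁ u) (hv : MemWeightedL2 w₂ v) :
    (∀ n, Summable fun m => ‖u (n - m) * v m‖) ∧ MemWeightedL2 w (discreteConv u v) ∧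
      weightedL2Norm w (discreteConv u v) ≤ √M * weightedL2Norm w₁ u * weightedL2Norm w₂ v := by
  set U : G → ℝ := fun n => w₁ n * ‖u n‖ ^ 2
  set V : G → ℝ := fun n => w₂ n * ‖v n‖ ^ 2
  have hU (n : G) : 0 ≤ U n := mul_nonneg (hw₁ n) (sq_nonneg _)
  have hV (n : G) : 0 ≤ V n := mul_nonneg (hw₂ n) (sq_nonneg _)
  have hUs : Summable U := hu
  have hVs : Summable V := hv
  obtain ⟨hrow, hUV⟩ := summable_and_hasSum_discreteConv hUs.norm hVs.norm
  have hpointwise (n : G) := summable_norm_and_mul_norm_discreteConv_sq_le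
    (hw n) hw₁ hw₂ (hκ n) (hwκ n) (hrow n)
  have hbound (n : G) : w n * ‖discreteConv u v n‖ ^ 2 ≤ M * discreteConv U V n :=
    (hpointwise n).2.trans <| mul_le_mul_of_nonneg_right (hκM n) <|
      tsum_nonneg fun m => mul_nonneg (hU _) (hV m)
  have hmem : MemWeightedL2 w (discreteConv u v) :=
    (hUV.summable.mul_left M).of_nonneg_of_le
      (fun n => mul_nonneg (hw n).le (sq_nonneg _)) hbound
  refine ⟨fun n => (hpointwise n).1, hmem, ?_⟩
  calc weightedL2Norm w (discreteConv u v)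
      ≤ √(M * ((∑' n, U n) * ∑' n, V n)) :=
        Real.sqrt_le_sqrt (hasSum_le hbound hmem.hasSum (hUV.mul_left M))
    _ = √M * weightedL2Norm w₁ u * weightedL2Norm w₂ v := by
        rw [Real.sqrt_mul' _ (mul_nonneg (tsum_nonneg hU) (tsum_nonneg hV)),
          Real.sqrt_mul (tsum_nonneg hU), ← mul_assoc]
        rfl

end WeightedL2

theorem stmt2_general {G R : Type*} [AddGroup G] [NonUnitalNormedRing R] [CompleteSpace R]
    {ω : G → ℝ} (hω : ∀ n, 0 < ω n) (hω_add : ∀ m n, ω (m + n) ≤ ω m + ω n) {s s₁ s₂ : ℝ}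
    (hs : 0 ≤ s) (hs₁ : s ≤ s₁) (hs₂ : s ≤ s₂)
    (hsum : Summable fun n => ω n ^ (2 * s - 2 * s₁ - 2 * s₂)) :
    ∃ C : ℝ, 0 < C ∧ ∀ u v : G → R,
      MemWeightedL2 (fun n => ω n ^ (2 * s₁)) u → MemWeightedL2 (fun n => ω n ^ (2 * s₂)) v →
      (∀ n, Summable fun m => ‖u (n - m) * v m‖) ∧
      MemWeightedL2 (fun n => ω n ^ (2 * s)) (discreteConv u v) ∧
      weightedL2Norm (fun n => ω n ^ (2 * s)) (discreteConv u v) ≤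
        C * weightedL2Norm (fun n => ω n ^ (2 * s₁)) u *
          weightedL2Norm (fun n => ω n ^ (2 * s₂)) v := by
  set τ := 2 * s - 2 * s₁ - 2 * s₂
  have hpos (r : ℝ) (n : G) : 0 < ω n ^ r := Real.rpow_pos_of_pos (hω n) r
  have hK : 0 < ∑' n, ω n ^ τ := hsum.tsum_pos (fun n => (hpos τ n).le) 0 (hpos τ 0)
  have hrow (n : G) : HasSum (fun m => 2 ^ (2 * s) * (ω (n - m) ^ τ + ω m ^ τ))
      (2 ^ (2 * s) * (∑' m, ω m ^ τ + ∑' m, ω m ^ τ)) :=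
    (((Equiv.subLeft n).hasSum_iff.2 hsum.hasSum).add hsum.hasSum).mul_left _
  refine ⟨√(2 ^ (2 * s) * (∑' m, ω m ^ τ + ∑' m, ω m ^ τ)), by positivity, fun u v hu hv =>
    hu.discreteConv_of_kernel (hpos _) (fun n => (hpos _ n).le) (fun n => (hpos _ n).le)
      (fun n => (hrow n).summable) (fun n => (hrow n).tsum_eq.le) (fun n m => ?_) hv⟩
  have hsplit : ω n ≤ ω (n - m) + ω m := by simpa only [sub_add_cancel] using hω_add (n - m) m
  exact rpow_le_mul_rpow_add_mul_of_le_add (hω _) (hω m) (hω n).le hsplit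
    (by linarith) (by linarith) (by linarith)

theorem summable_one_add_norm_rpow_of_lt {E : Type*} [NormedAddCommGroup E] [NormedSpace ℝ E]
    [FiniteDimensional ℝ E] (L : Submodule ℤ E) [DiscreteTopology L] {r : ℝ}
    (hr : r < -Module.finrank ℤ L) : Summable fun z : L => (1 + ‖z‖) ^ r := by
  refine (ZLattice.summable_norm_rpow L r hr).of_norm_bounded_eventually ?_
  filter_upwards [(Set.finite_singleton (0 : L)).compl_mem_cofinite] with z hz
  have hr0 : r ≤ 0 := hr.le.trans (neg_nonpos.2 (Nat.cast_nonneg _))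
  rw [Real.norm_of_nonneg (by positivity)]
  exact Real.rpow_le_rpow_of_nonpos (norm_pos_iff.2 hz) (by linarith) hr0

section LatNorm

variable {d : ℕ}

theorem latNorm_eq_norm_toLp (n : Fin d → ℤ) :
    latNorm n = ‖WithLp.toLp 2 fun i => (n i : ℝ)‖ := by
  simp [latNorm, EuclideanSpace.norm_eq]

theorem one_add_latNorm_pos (n : Fin d → ℤ) : 0 < 1 + latNorm n :=
  add_pos_of_pos_of_nonneg one_pos (Real.sqrt_nonneg _)

theorem latNorm_add_le (m n : Fin d → ℤ) : latNorm (m + n) ≤ latNorm m + latNorm n := by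
  simp only [latNorm_eq_norm_toLp, Pi.add_apply, Int.cast_add]
  exact norm_add_le (WithLp.toLp 2 fun i => (m i : ℝ)) (WithLp.toLp 2 fun i => (n i : ℝ))

theorem one_add_latNorm_add_le (m n : Fin d → ℤ) :
    1 + latNorm (m + n) ≤ 1 + latNorm m + (1 + latNorm n) := by
  linarith [latNorm_add_le m n]

theorem summable_one_add_latNorm_rpow {r : ℝ} (hr : r < -(d : ℝ)) :
    Summable fun n : Fin d → ℤ => (1 + latNorm n) ^ r := by
  let b := (EuclideanSpace.basisFun (Fin d) ℝ).toBasis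
  let φ := (b.restrictScalars ℤ).equivFun.symm
  have hφ (n : Fin d → ℤ) : ‖φ n‖ = latNorm n := by
    have hcoe : (φ n : EuclideanSpace ℝ (Fin d)) = WithLp.toLp 2 fun i => (n i : ℝ) := by
      have hsum : φ n = ∑ i, n i • b.restrictScalars ℤ i := Module.Basis.equivFun_symm_apply _ n
      rw [hsum]
      ext j
      simp only [Submodule.coe_sum, Submodule.coe_smul, Module.Basis.restrictScalars_apply]
      simp [b, Pi.single_apply]
    rw [latNorm_eq_norm_toLp, ← hcoe, Submodule.coe_norm]
  have hrank : Module.finrank ℤ (Submodule.span ℤ (Set.range b)) = d := by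
    rw [ZLattice.rank ℝ, finrank_euclideanSpace_fin]
  have hsum := summable_one_add_norm_rpow_of_lt (Submodule.span ℤ (Set.range b))
    (r := r) (by rwa [hrank])
  simpa only [Function.comp_def, hφ] using hsum.comp_injective φ.injective

end LatNorm

/-- For `s₁, s₂ ≥ 0`, `0 ≤ s ≤ min(s₁, s₂)`, `s < s₁ + s₂ − d/2`, there is a
constant `C = C(s, s₁, s₂, d) > 0` such that for all `u ∈ ℓ²_{s₁}`, `v ∈ ℓ²_{s₂}` the
convolution `(u*v)(n) = ∑_m u(n−m) v(m)` converges absolutely at every `n`, and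
`‖u*v‖_{ℓ²_s} ≤ C ‖u‖_{ℓ²_{s₁}} ‖v‖_{ℓ²_{s₂}}`. -/
theorem stmt2 (d : ℕ) (hd : 1 ≤ d) (s s₁ s₂ : ℝ) (h₁ : 0 ≤ s₁) (h₂ : 0 ≤ s₂)
    (hs0 : 0 ≤ s) (hsmin : s ≤ min s₁ s₂) (hs : s < s₁ + s₂ - (d : ℝ) / 2) :
    ∃ C : ℝ, 0 < C ∧ ∀ u v : (Fin d → ℤ) → ℂ,
      (Summable fun n : Fin d → ℤ => (1 + latNorm n) ^ (2 * s₁) * ‖u n‖ ^ 2) →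
      (Summable fun n : Fin d → ℤ => (1 + latNorm n) ^ (2 * s₂) * ‖v n‖ ^ 2) →
      (∀ n : Fin d → ℤ, Summable fun m : Fin d → ℤ => ‖u (n - m) * v m‖) ∧
      (Summable fun n : Fin d → ℤ =>
        (1 + latNorm n) ^ (2 * s) * ‖∑' m : Fin d → ℤ, u (n - m) * v m‖ ^ 2) ∧
      Real.sqrt (∑' n : Fin d → ℤ,
          (1 + latNorm n) ^ (2 * s) * ‖∑' m : Fin d → ℤ, u (n - m) * v m‖ ^ 2)
        ≤ C * Real.sqrt (∑' n : Fin d → ℤ, (1 + latNorm n) ^ (2 * s₁) * ‖u n‖ ^ 2)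
          * Real.sqrt (∑' n : Fin d → ℤ, (1 + latNorm n) ^ (2 * s₂) * ‖v n‖ ^ 2) := by
  exact stmt2_general one_add_latNorm_pos one_add_latNorm_add_le hs0 (le_min_iff.1 hsmin).1
    (le_min_iff.1 hsmin).2 (summable_one_add_latNorm_rpow (by linarith))
end

section
/- Let d ≥ 1 be an integer and s > d/2. Then there exists a constant C = C(d, s) > 0 such that for all u, v : ℤ^d → ℂ with ‖u‖_{ℓ²_s} < ∞ and ‖v‖_{ℓ²_s} < ∞, the convolution u*v satisfies ‖u*v‖_{ℓ²_s} ≤ C ‖u‖_{ℓ²_s} ‖v‖_{ℓ²_s}. (This is the multiplicative property of the Sobolev space H^s(𝕋^d) for s > d/2, expressed on the Fourier side: the Fourier coefficients of a product of two H^s functions are the convolution of their Fourier coefficients.) -/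
/-!
Write `W n = (1 + |n|)^(2s)`. By the triangle inequality `W (m + n) ≤ A (W m + W n)`, and dividing
by `W (m + n) W m W n` turns this into
`1 / (W (n - m) W m) ≤ (A / W n) (1 / W (n - m) + 1 / W m)`.
As `2s > d`, the sum `S` of `1 / W` over `ℤ^d` is finite, so the left-hand side has sum at most
`2AS / W n` over `m`. Cauchy–Schwarz then gives
`W n |(u * v) n|² ≤ 2AS ((W |u|²) * (W |v|²)) n`, and the sum of a convolution is the product of
the sums.
-/

section CauchySchwarz

variable {ι : Type*} {r f g : ι → ℝ}

lemma summable_of_sq_le_mul (hf₀ : ∀ i, 0 ≤ f i) (hg₀ : ∀ i, 0 ≤ g i)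
    (hrfg : ∀ i, r i ^ 2 ≤ f i * g i) (hf : Summable f) (hg : Summable g) : Summable r := by
  refine .of_norm_bounded (hf.add hg) fun i ↦ abs_le_of_sq_le_sq ?_ (add_nonneg (hf₀ i) (hg₀ i))
  calc r i ^ 2 ≤ f i * g i := hrfg i
    _ ≤ (f i + g i) ^ 2 := by
      nlinarith [mul_nonneg (hf₀ i) (hg₀ i), sq_nonneg (f i), sq_nonneg (g i)]

lemma tsum_sq_le_tsum_mul_tsum_of_sq_le_mul (hf₀ : ∀ i, 0 ≤ f i) (hg₀ : ∀ i, 0 ≤ g i)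
    (hrfg : ∀ i, r i ^ 2 ≤ f i * g i) (hf : Summable f) (hg : Summable g) :
    (∑' i, r i) ^ 2 ≤ (∑' i, f i) * ∑' i, g i := by
  have hsum : Summable r := summable_of_sq_le_mul hf₀ hg₀ hrfg hf hg
  refine le_of_tendsto' (hsum.hasSum.pow 2) fun t ↦ ?_
  calc (∑ i ∈ t, r i) ^ 2 ≤ (∑ i ∈ t, f i) * ∑ i ∈ t, g i :=
        t.sum_sq_le_sum_mul_sum_of_sq_le_mul (fun i _ ↦ hf₀ i) (fun i _ ↦ hg₀ i)
          fun i _ ↦ hrfg i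
    _ ≤ (∑' i, f i) * ∑' i, g i :=
        mul_le_mul (hf.sum_le_tsum t fun i _ ↦ hf₀ i) (hg.sum_le_tsum t fun i _ ↦ hg₀ i)
          (t.sum_nonneg fun i _ ↦ hg₀ i) (tsum_nonneg hf₀)

end CauchySchwarz

section Convolution

variable {G R : Type*} [AddGroup G]

lemma hasSum_sub_add_self {M : Type*} [AddCommMonoid M] [TopologicalSpace M] [ContinuousAdd M]
    {f : G → M} {a : M} (hf : HasSum f a) (n : G) : HasSum (fun m ↦ f (n - m) + f m) (a + a) :=
  ((Equiv.subLeft n).hasSum_iff.2 hf).add hf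

/-- The convolution `(u * v)(n) = ∑ₘ u(n - m) v(m)` of two functions on a discrete additive group,
written as a sum over the whole group. It takes the junk value `0` at the points where the series
does not converge. -/
noncomputable def addConv [NonUnitalNonAssocSemiring R] [TopologicalSpace R] (u v : G → R) (n : G) :
    R :=
  ∑' m, u (n - m) * v m

variable (G) in
/-- The shear `(n, m) ↦ (n - m, m)` of `G × G`, which turns a sum of products over `G × G` into the
sum of a convolution. -/
def subProdEquiv : G × G ≃ G × G where
  toFun p := (p.1 - p.2, p.2)
  invFun p := (p.1 + p.2, p.2)
  left_inv p := by simp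
  right_inv p := by simp

variable [NormedRing R] [CompleteSpace R] {f g : G → R}

lemma summable_sub_mul_of_summable_norm (hf : Summable fun n ↦ ‖f n‖)
    (hg : Summable fun n ↦ ‖g n‖) : Summable fun p : G × G ↦ f (p.1 - p.2) * g p.2 :=
  (subProdEquiv G).summable_iff.2 (summable_mul_of_summable_norm hf hg)

lemma summable_sub_mul_apply_of_summable_norm (hf : Summable fun n ↦ ‖f n‖)
    (hg : Summable fun n ↦ ‖g n‖) (n : G) : Summable fun m ↦ f (n - m) * g m :=
  (summable_sub_mul_of_summable_norm hf hg).prod_factor n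

lemma summable_addConv_of_summable_norm (hf : Summable fun n ↦ ‖f n‖)
    (hg : Summable fun n ↦ ‖g n‖) : Summable (addConv f g) :=
  (summable_sub_mul_of_summable_norm hf hg).prod

lemma tsum_addConv_of_summable_norm (hf : Summable fun n ↦ ‖f n‖)
    (hg : Summable fun n ↦ ‖g n‖) : ∑' n, addConv f g n = (∑' n, f n) * ∑' n, g n := by
  calc ∑' n, addConv f g n = ∑' p : G × G, f (p.1 - p.2) * g p.2 :=
        (summable_sub_mul_of_summable_norm hf hg).tsum_prod.symm
    _ = ∑' p : G × G, f p.1 * g p.2 :=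
        (subProdEquiv G).tsum_eq fun p : G × G ↦ f p.1 * g p.2
    _ = (∑' n, f n) * ∑' n, g n := (tsum_mul_tsum_of_summable_norm hf hg).symm

end Convolution

/-- A positive weight on an additive group that is subadditive up to the constant factor `A`. Such
weights, if their inverses are summable, make the weighted `ℓ²` space a convolution algebra. -/
structure IsWeaklySubadditive {G : Type*} [AddGroup G] (w : G → ℝ) (A : ℝ) : Prop where
  pos (n : G) : 0 < w n
  map_add_le (m n : G) : w (m + n) ≤ A * (w m + w n)

namespace IsWeaklySubadditive

section Weight

variable {G H : Type*} [AddGroup G] [AddGroup H] {w : G → ℝ} {A : ℝ}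

lemma comp_addMonoidHom (hw : IsWeaklySubadditive w A) (φ : H →+ G) :
    IsWeaklySubadditive (w ∘ φ) A where
  pos n := hw.pos (φ n)
  map_add_le m n := by simpa only [Function.comp_apply, map_add] using hw.map_add_le (φ m) (φ n)

lemma inv_mul_inv_nonneg (hw : IsWeaklySubadditive w A) (n m : G) :
    0 ≤ (w (n - m))⁻¹ * (w m)⁻¹ :=
  mul_nonneg (inv_nonneg.2 (hw.pos _).le) (inv_nonneg.2 (hw.pos m).le)

lemma inv_mul_inv_le (hw : IsWeaklySubadditive w A) (n m : G) :
    (w (n - m))⁻¹ * (w m)⁻¹ ≤ A / w n * ((w (n - m))⁻¹ + (w m)⁻¹) := by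
  have hn := hw.pos n
  have hnm := hw.pos (n - m)
  have hm := hw.pos m
  have hle : w n ≤ A * (w (n - m) + w m) := by simpa using hw.map_add_le (n - m) m
  calc (w (n - m))⁻¹ * (w m)⁻¹ = w n / (w n * w (n - m) * w m) := by field_simp
    _ ≤ A * (w (n - m) + w m) / (w n * w (n - m) * w m) := by gcongr
    _ = A / w n * ((w (n - m))⁻¹ + (w m)⁻¹) := by field_simp; ring

lemma summable_inv_mul_inv (hw : IsWeaklySubadditive w A) (hS : Summable fun n ↦ (w n)⁻¹) (n : G) :
    Summable fun m ↦ (w (n - m))⁻¹ * (w m)⁻¹ :=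
  .of_nonneg_of_le (hw.inv_mul_inv_nonneg n) (hw.inv_mul_inv_le n)
    ((hasSum_sub_add_self hS.hasSum n).summable.mul_left _)

lemma tsum_inv_mul_inv_le (hw : IsWeaklySubadditive w A) (hS : Summable fun n ↦ (w n)⁻¹) (n : G) :
    ∑' m, (w (n - m))⁻¹ * (w m)⁻¹ ≤ A / w n * (∑' m, (w m)⁻¹ + ∑' m, (w m)⁻¹) :=
  hasSum_le (hw.inv_mul_inv_le n) (hw.summable_inv_mul_inv hS n).hasSum
    ((hasSum_sub_add_self hS.hasSum n).mul_left _)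

end Weight

section Algebra

variable {G R : Type*} [AddGroup G] [NonUnitalNormedRing R] {w : G → ℝ} {A : ℝ} {u v : G → R}

lemma norm_mul_sq_le (hw : IsWeaklySubadditive w A) (u v : G → R) (n m : G) :
    ‖u (n - m) * v m‖ ^ 2 ≤
      (w (n - m))⁻¹ * (w m)⁻¹ * (w (n - m) * ‖u (n - m)‖ ^ 2 * (w m * ‖v m‖ ^ 2)) := by
  have hnm := hw.pos (n - m)
  have hm := hw.pos m
  calc ‖u (n - m) * v m‖ ^ 2 ≤ (‖u (n - m)‖ * ‖v m‖) ^ 2 := by gcongr; exact norm_mul_le _ _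
    _ = _ := by field_simp

lemma mul_norm_sq_nonneg (hw : IsWeaklySubadditive w A) (u : G → R) (n : G) :
    0 ≤ w n * ‖u n‖ ^ 2 :=
  mul_nonneg (hw.pos n).le (sq_nonneg _)

lemma summable_norm_mul (hw : IsWeaklySubadditive w A) (hS : Summable fun n ↦ (w n)⁻¹)
    (hu : Summable fun n ↦ w n * ‖u n‖ ^ 2) (hv : Summable fun n ↦ w n * ‖v n‖ ^ 2) (n : G) :
    Summable fun m ↦ ‖u (n - m) * v m‖ :=
  summable_of_sq_le_mul (hw.inv_mul_inv_nonneg n)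
    (fun m ↦ mul_nonneg (hw.mul_norm_sq_nonneg u _) (hw.mul_norm_sq_nonneg v m))
    (hw.norm_mul_sq_le u v n) (hw.summable_inv_mul_inv hS n)
    (summable_sub_mul_apply_of_summable_norm hu.norm hv.norm n)

lemma mul_norm_addConv_sq_le (hw : IsWeaklySubadditive w A) (hS : Summable fun n ↦ (w n)⁻¹)
    (hu : Summable fun n ↦ w n * ‖u n‖ ^ 2) (hv : Summable fun n ↦ w n * ‖v n‖ ^ 2) (n : G) :
    w n * ‖addConv u v n‖ ^ 2 ≤
      2 * A * (∑' m, (w m)⁻¹) *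
        addConv (fun m ↦ w m * ‖u m‖ ^ 2) (fun m ↦ w m * ‖v m‖ ^ 2) n := by
  set S := ∑' m, (w m)⁻¹
  set P := addConv (fun m ↦ w m * ‖u m‖ ^ 2) (fun m ↦ w m * ‖v m‖ ^ 2) n
  have hn := hw.pos n
  have hterm (m : G) : 0 ≤ w (n - m) * ‖u (n - m)‖ ^ 2 * (w m * ‖v m‖ ^ 2) :=
    mul_nonneg (hw.mul_norm_sq_nonneg u _) (hw.mul_norm_sq_nonneg v m)
  have hP : 0 ≤ P := tsum_nonneg hterm
  have hconv : ‖addConv u v n‖ ^ 2 ≤ A / w n * (S + S) * P :=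
    calc ‖addConv u v n‖ ^ 2 ≤ (∑' m, ‖u (n - m) * v m‖) ^ 2 := by
          gcongr
          exact norm_tsum_le_tsum_norm (hw.summable_norm_mul hS hu hv n)
      _ ≤ (∑' m, (w (n - m))⁻¹ * (w m)⁻¹) * P :=
          tsum_sq_le_tsum_mul_tsum_of_sq_le_mul (hw.inv_mul_inv_nonneg n) hterm
            (hw.norm_mul_sq_le u v n) (hw.summable_inv_mul_inv hS n)
            (summable_sub_mul_apply_of_summable_norm hu.norm hv.norm n)
      _ ≤ A / w n * (S + S) * P := by gcongr; exact hw.tsum_inv_mul_inv_le hS n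
  calc w n * ‖addConv u v n‖ ^ 2 ≤ w n * (A / w n * (S + S) * P) := by gcongr
    _ = 2 * A * S * P := by field_simp; ring

lemma summable_mul_norm_addConv_sq (hw : IsWeaklySubadditive w A)
    (hS : Summable fun n ↦ (w n)⁻¹) (hu : Summable fun n ↦ w n * ‖u n‖ ^ 2)
    (hv : Summable fun n ↦ w n * ‖v n‖ ^ 2) :
    Summable fun n ↦ w n * ‖addConv u v n‖ ^ 2 :=
  .of_nonneg_of_le (hw.mul_norm_sq_nonneg _) (hw.mul_norm_addConv_sq_le hS hu hv)
    ((summable_addConv_of_summable_norm hu.norm hv.norm).mul_left _)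

lemma tsum_mul_norm_addConv_sq_le (hw : IsWeaklySubadditive w A)
    (hS : Summable fun n ↦ (w n)⁻¹) (hu : Summable fun n ↦ w n * ‖u n‖ ^ 2)
    (hv : Summable fun n ↦ w n * ‖v n‖ ^ 2) :
    ∑' n, w n * ‖addConv u v n‖ ^ 2 ≤
      2 * A * (∑' n, (w n)⁻¹) * (∑' n, w n * ‖u n‖ ^ 2) * ∑' n, w n * ‖v n‖ ^ 2 := by
  rw [mul_assoc, ← tsum_addConv_of_summable_norm hu.norm hv.norm, ← tsum_mul_left]
  exact (hw.summable_mul_norm_addConv_sq hS hu hv).tsum_le_tsum (hw.mul_norm_addConv_sq_le hS hu hv)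
    ((summable_addConv_of_summable_norm hu.norm hv.norm).mul_left _)

lemma sqrt_tsum_mul_norm_addConv_sq_le (hw : IsWeaklySubadditive w A)
    (hS : Summable fun n ↦ (w n)⁻¹) (hu : Summable fun n ↦ w n * ‖u n‖ ^ 2)
    (hv : Summable fun n ↦ w n * ‖v n‖ ^ 2) :
    √(∑' n, w n * ‖addConv u v n‖ ^ 2) ≤
      √(2 * A * ∑' n, (w n)⁻¹) * √(∑' n, w n * ‖u n‖ ^ 2) * √(∑' n, w n * ‖v n‖ ^ 2) := by
  rw [← Real.sqrt_mul' _ (tsum_nonneg (hw.mul_norm_sq_nonneg u)),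
    ← Real.sqrt_mul' _ (tsum_nonneg (hw.mul_norm_sq_nonneg v))]
  exact Real.sqrt_le_sqrt (hw.tsum_mul_norm_addConv_sq_le hS hu hv)

end Algebra

end IsWeaklySubadditive

lemma isWeaklySubadditive_one_add_norm_rpow (E : Type*) [SeminormedAddGroup E] {r : ℝ}
    (hr : 1 ≤ r) : IsWeaklySubadditive (fun x : E ↦ (1 + ‖x‖) ^ r) (2 ^ (r - 1)) where
  pos x := by positivity
  map_add_le x y :=
    calc (1 + ‖x + y‖) ^ r ≤ ((1 + ‖x‖) + (1 + ‖y‖)) ^ r :=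
          Real.rpow_le_rpow (by positivity) (by linarith [norm_add_le x y]) (by linarith)
      _ ≤ 2 ^ (r - 1) * ((1 + ‖x‖) ^ r + (1 + ‖y‖) ^ r) :=
          mod_cast NNReal.rpow_add_le_mul_rpow_add_rpow (1 + ‖x‖₊) (1 + ‖y‖₊) hr

lemma summable_inv_one_add_norm_rpow {E : Type*} [NormedAddCommGroup E] [NormedSpace ℝ E]
    [FiniteDimensional ℝ E] (L : Submodule ℤ E) [DiscreteTopology L] {r : ℝ}
    (hr : Module.finrank ℤ L < r) : Summable fun x : L ↦ ((1 + ‖x‖) ^ r)⁻¹ := by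
  refine (ZLattice.summable_norm_rpow L (-r) (neg_lt_neg hr)).of_norm_bounded_eventually ?_
  filter_upwards [(Set.finite_singleton (0 : L)).compl_mem_cofinite] with x hx
  have hx₀ : 0 < ‖x‖ := norm_pos_iff.2 hx
  have hr₀ : 0 ≤ r := (Nat.cast_nonneg _).trans hr.le
  rw [Real.norm_of_nonneg (by positivity), Real.rpow_neg hx₀.le]
  gcongr
  linarith

section IntegerLattice

variable (d : ℕ)

/-- The lattice `ℤ^d` inside the Euclidean space `ℝ^d`. -/
abbrev euclideanLattice : Submodule ℤ (EuclideanSpace ℝ (Fin d)) :=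
  Submodule.span ℤ (Set.range (EuclideanSpace.basisFun (Fin d) ℝ).toBasis)

/-- The coordinate isomorphism from `ℤ^d` to the lattice, used to read `latNorm` as a Euclidean
norm. -/
noncomputable def euclideanLatticeEquiv : (Fin d → ℤ) ≃ₗ[ℤ] euclideanLattice d :=
  ((EuclideanSpace.basisFun (Fin d) ℝ).toBasis.restrictScalars ℤ).equivFun.symm

variable {d}

lemma euclideanLatticeEquiv_apply (n : Fin d → ℤ) (i : Fin d) :
    (euclideanLatticeEquiv d n : EuclideanSpace ℝ (Fin d)) i = n i := by
  have hrepr := (EuclideanSpace.basisFun (Fin d) ℝ).toBasis.restrictScalars_repr_apply ℤ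
    (euclideanLatticeEquiv d n) i
  rw [← Module.Basis.equivFun_apply, euclideanLatticeEquiv, LinearEquiv.apply_symm_apply] at hrepr
  exact hrepr.symm

lemma norm_euclideanLatticeEquiv (n : Fin d → ℤ) : ‖euclideanLatticeEquiv d n‖ = latNorm n := by
  simp [latNorm, EuclideanSpace.norm_eq, euclideanLatticeEquiv_apply]

variable (d) in
lemma isWeaklySubadditive_one_add_latNorm_rpow {r : ℝ} (hr : 1 ≤ r) :
    IsWeaklySubadditive (fun n : Fin d → ℤ ↦ (1 + latNorm n) ^ r) (2 ^ (r - 1)) := by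
  simp only [← norm_euclideanLatticeEquiv]
  exact (isWeaklySubadditive_one_add_norm_rpow (euclideanLattice d) hr).comp_addMonoidHom
    (euclideanLatticeEquiv d : (Fin d → ℤ) →+ euclideanLattice d)

lemma summable_inv_one_add_latNorm_rpow {r : ℝ} (hr : d < r) :
    Summable fun n : Fin d → ℤ ↦ ((1 + latNorm n) ^ r)⁻¹ := by
  have hrank : (Module.finrank ℤ (euclideanLattice d) : ℝ) < r := by
    rwa [ZLattice.rank ℝ, finrank_euclideanSpace_fin]
  simp only [← norm_euclideanLatticeEquiv]
  exact (summable_inv_one_add_norm_rpow (euclideanLattice d) hrank).comp_injective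
    (euclideanLatticeEquiv d).injective

end IntegerLattice

theorem stmt3_general {R : Type*} [NonUnitalNormedRing R] [CompleteSpace R] (d : ℕ) (hd : 1 ≤ d)
    (s : ℝ) (hs : (d : ℝ) / 2 < s) :
    ∃ C : ℝ, 0 < C ∧ ∀ u v : (Fin d → ℤ) → R,
      (Summable fun n : Fin d → ℤ => (1 + latNorm n) ^ (2 * s) * ‖u n‖ ^ 2) →
      (Summable fun n : Fin d → ℤ => (1 + latNorm n) ^ (2 * s) * ‖v n‖ ^ 2) →
      (∀ n : Fin d → ℤ, Summable fun m : Fin d → ℤ => ‖u (n - m) * v m‖) ∧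
      (Summable fun n : Fin d → ℤ =>
        (1 + latNorm n) ^ (2 * s) * ‖∑' m : Fin d → ℤ, u (n - m) * v m‖ ^ 2) ∧
      Real.sqrt (∑' n : Fin d → ℤ,
          (1 + latNorm n) ^ (2 * s) * ‖∑' m : Fin d → ℤ, u (n - m) * v m‖ ^ 2)
        ≤ C * Real.sqrt (∑' n : Fin d → ℤ, (1 + latNorm n) ^ (2 * s) * ‖u n‖ ^ 2)
          * Real.sqrt (∑' n : Fin d → ℤ, (1 + latNorm n) ^ (2 * s) * ‖v n‖ ^ 2) := by
  have hd_real : (1 : ℝ) ≤ d := mod_cast hd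
  have hw := isWeaklySubadditive_one_add_latNorm_rpow d (r := 2 * s) (by linarith)
  have hS := summable_inv_one_add_latNorm_rpow (d := d) (r := 2 * s) (by linarith)
  have hS_pos := hS.tsum_pos (fun n ↦ (inv_pos.2 (hw.pos n)).le) 0 (inv_pos.2 (hw.pos 0))
  exact ⟨√(2 * 2 ^ (2 * s - 1) * ∑' n : Fin d → ℤ, ((1 + latNorm n) ^ (2 * s))⁻¹), by positivity,
    fun u v hu hv ↦ ⟨hw.summable_norm_mul hS hu hv, hw.summable_mul_norm_addConv_sq hS hu hv,
      hw.sqrt_tsum_mul_norm_addConv_sq_le hS hu hv⟩⟩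

/-- For `d ≥ 1` and `s > d/2` there is a constant `C = C(d, s) > 0` such that
for all `u, v : ℤ^d → ℂ` with finite `ℓ²_s`-norms, the convolution `u*v` (which converges
absolutely at every point) satisfies `‖u*v‖_{ℓ²_s} ≤ C ‖u‖_{ℓ²_s} ‖v‖_{ℓ²_s}`.
This is the multiplicative property of `H^s(𝕋^d)`, `s > d/2`, on the Fourier side. -/
theorem stmt3 (d : ℕ) (hd : 1 ≤ d) (s : ℝ) (hs : (d : ℝ) / 2 < s) :
    ∃ C : ℝ, 0 < C ∧ ∀ u v : (Fin d → ℤ) → ℂ,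
      (Summable fun n : Fin d → ℤ => (1 + latNorm n) ^ (2 * s) * ‖u n‖ ^ 2) →
      (Summable fun n : Fin d → ℤ => (1 + latNorm n) ^ (2 * s) * ‖v n‖ ^ 2) →
      (∀ n : Fin d → ℤ, Summable fun m : Fin d → ℤ => ‖u (n - m) * v m‖) ∧
      (Summable fun n : Fin d → ℤ =>
        (1 + latNorm n) ^ (2 * s) * ‖∑' m : Fin d → ℤ, u (n - m) * v m‖ ^ 2) ∧
      Real.sqrt (∑' n : Fin d → ℤ,
          (1 + latNorm n) ^ (2 * s) * ‖∑' m : Fin d → ℤ, u (n - m) * v m‖ ^ 2)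
        ≤ C * Real.sqrt (∑' n : Fin d → ℤ, (1 + latNorm n) ^ (2 * s) * ‖u n‖ ^ 2)
          * Real.sqrt (∑' n : Fin d → ℤ, (1 + latNorm n) ^ (2 * s) * ‖v n‖ ^ 2) :=
  stmt3_general d hd s hs
end

section
/- Let d ≥ 1 be an integer and s > 7d/2. Then there exists a constant C = C(s, d) > 0 such that for every h : ℤ^d → [0, ∞) with ‖h‖_{ℓ²_s} < ∞ one has Σ_{n ∈ ℤ^d} ( Σ_{m ∈ ℤ^d} h(n − m)^{1/2} h(m)^{1/2} )^{1/2} ≤ C ‖h‖_{ℓ²_s}^{1/2}. In particular, the function n ↦ ((h^{1/2} * h^{1/2})(n))^{1/2} belongs to ℓ¹(ℤ^d). -/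
/-!
Submultiplicative weights turn convolution estimates into weighted `ℓ¹` estimates: if `v` is such
a weight, then `v (f * g) ≤ (v f) * (v g)` pointwise for `f, g ≥ 0`, hence
`‖v (f * g)‖₁ ≤ ‖v f‖₁ ‖v g‖₁`. With `w = 1 + |·|` and `v = w ^ b`, two applications of Hölder's
inequality give
`∑ (√h * √h)^{1/2} ≤ ‖w^{-b}‖₁^{1/2} ‖w^b (√h * √h)‖₁^{1/2} ≤ ‖w^{-b}‖₁^{1/2} ‖w^b √h‖₁` and
`‖w^b √h‖₁ ≤ ‖w^{b - s/2}‖_{4/3} ‖w^{s/2} √h‖₄`, where the last factor is `‖h‖_{ℓ²_s}^{1/2}`.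
The sums of powers of `w` converge if `b > d` and `4/3 (s/2 - b) > d`; such a `b` exists precisely
when `s > 7d/2`.
-/

section WeightedHolder

variable {ι : Type*} {f w h : ι → ℝ}

theorem summable_and_tsum_le_of_weighted_holder {u : ι → ℝ} {p q : ℝ} (hpq : p.HolderConjugate q)
    (hu : ∀ i, 0 < u i) (hf : ∀ i, 0 ≤ f i) (hu_sum : Summable fun i => u i ^ (-p))
    (huf_sum : Summable fun i => (u i * f i) ^ q) :
    Summable f ∧
      ∑' i, f i ≤ (∑' i, u i ^ (-p)) ^ (1 / p) * (∑' i, (u i * f i) ^ q) ^ (1 / q) := by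
  have hpow : ∀ i, (u i)⁻¹ ^ p = u i ^ (-p) := fun i => by
    rw [Real.inv_rpow (hu i).le, Real.rpow_neg (hu i).le]
  have hmul : ∀ i, (u i)⁻¹ * (u i * f i) = f i := fun i => inv_mul_cancel_left₀ (hu i).ne' _
  have key := Real.summable_and_inner_le_Lp_mul_Lq_tsum_of_nonneg hpq
    (fun i => (inv_pos.2 (hu i)).le) (fun i => mul_nonneg (hu i).le (hf i))
    (by simpa only [hpow] using hu_sum) huf_sum
  simpa only [hpow, hmul] using key

theorem summable_sqrt_and_tsum_sqrt_le {v : ι → ℝ} (hv : ∀ i, 0 < v i) (hf : ∀ i, 0 ≤ f i)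
    (hv_sum : Summable fun i => (v i)⁻¹) (hvf_sum : Summable fun i => v i * f i) :
    (Summable fun i => √(f i)) ∧ ∑' i, √(f i) ≤ √(∑' i, (v i)⁻¹) * √(∑' i, v i * f i) := by
  have hinv : ∀ i, √(v i) ^ (-2 : ℝ) = (v i)⁻¹ := fun i => by
    rw [Real.rpow_neg (Real.sqrt_nonneg _), Real.rpow_two, Real.sq_sqrt (hv i).le]
  have hsq : ∀ i, (√(v i) * √(f i)) ^ (2 : ℝ) = v i * f i := fun i => by
    rw [Real.rpow_two, mul_pow, Real.sq_sqrt (hv i).le, Real.sq_sqrt (hf i)]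
  have key := summable_and_tsum_le_of_weighted_holder Real.HolderConjugate.two_two
    (fun i => Real.sqrt_pos.2 (hv i)) (fun i => Real.sqrt_nonneg (f i))
    (by simpa only [hinv] using hv_sum) (by simpa only [hsq] using hvf_sum)
  simpa only [hinv, hsq, ← Real.sqrt_eq_rpow] using key

theorem summable_rpow_mul_sqrt_and_tsum_le {s b : ℝ} (hw : ∀ i, 0 < w i) (hh : ∀ i, 0 ≤ h i)
    (hw_sum : Summable fun i => w i ^ (-((s / 2 - b) * (4 / 3))))
    (hh_sum : Summable fun i => w i ^ (2 * s) * h i ^ 2) :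
    (Summable fun i => w i ^ b * √(h i)) ∧
      ∑' i, w i ^ b * √(h i) ≤ (∑' i, w i ^ (-((s / 2 - b) * (4 / 3)))) ^ (3 / 4 : ℝ) *
        √√(∑' i, w i ^ (2 * s) * h i ^ 2) := by
  have hweight : ∀ i, (w i ^ (s / 2 - b)) ^ (-(4 / 3) : ℝ) = w i ^ (-((s / 2 - b) * (4 / 3))) :=
    fun i => by rw [← Real.rpow_mul (hw i).le, mul_neg]
  have hmul : ∀ i, (w i ^ (s / 2 - b) * (w i ^ b * √(h i))) ^ (4 : ℝ) =
      w i ^ (2 * s) * h i ^ 2 := fun i => by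
    rw [← mul_assoc, ← Real.rpow_add (hw i), sub_add_cancel,
      Real.mul_rpow (Real.rpow_nonneg (hw i).le _) (Real.sqrt_nonneg _),
      ← Real.rpow_mul (hw i).le, show s / 2 * 4 = 2 * s by ring, Real.sqrt_eq_rpow,
      ← Real.rpow_mul (hh i), ← Real.rpow_natCast]
    norm_num
  have hroot : ∀ x : ℝ, 0 ≤ x → x ^ (1 / 4 : ℝ) = √√x := fun x hx => by
    rw [Real.sqrt_eq_rpow, Real.sqrt_eq_rpow, ← Real.rpow_mul hx]
    norm_num
  have key := summable_and_tsum_le_of_weighted_holder (p := 4 / 3) (q := 4)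
    (by rw [Real.holderConjugate_iff]; norm_num)
    (fun i => Real.rpow_pos_of_pos (hw i) (s / 2 - b))
    (fun i => mul_nonneg (Real.rpow_nonneg (hw i).le b) (Real.sqrt_nonneg (h i)))
    (by simpa only [hweight] using hw_sum) (by simpa only [hmul] using hh_sum)
  have hsum_nonneg : 0 ≤ ∑' i, w i ^ (2 * s) * h i ^ 2 :=
    tsum_nonneg fun i => mul_nonneg (Real.rpow_nonneg (hw i).le _) (sq_nonneg _)
  simpa only [hweight, hmul, one_div_div, hroot _ hsum_nonneg] using key

end WeightedHolder

section Convolution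

variable {G : Type*} [AddGroup G]

theorem hasSum_prod_sub_mul {R : Type*} [NormedRing R] [CompleteSpace R] {f g : G → R}
    (hf : Summable fun n => ‖f n‖) (hg : Summable fun n => ‖g n‖) :
    HasSum (fun p : G × G => f (p.1 - p.2) * g p.2) ((∑' n, f n) * ∑' n, g n) := by
  let e : G × G ≃ G × G :=
    { toFun := fun p => (p.1 - p.2, p.2)
      invFun := fun p => (p.1 + p.2, p.2)
      left_inv := fun p => by simp only [sub_add_cancel]
      right_inv := fun p => by simp only [add_sub_cancel_right] }
  rw [tsum_mul_tsum_of_summable_norm hf hg]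
  exact e.hasSum_iff.2 (summable_mul_of_summable_norm hf hg).hasSum

/-- Positive submultiplicative weights on an additive group, also known as Beurling weights: the
weights `v` for which `ℓ¹(v)` is an algebra under convolution. -/
structure IsSubmultiplicativeWeight (v : G → ℝ) : Prop where
  pos : ∀ n, 0 < v n
  map_add_le : ∀ m n, v (m + n) ≤ v m * v n

theorem isSubmultiplicativeWeight_one_add_norm_comp {E : Type*} [SeminormedAddGroup E]
    (φ : G →+ E) : IsSubmultiplicativeWeight fun n => 1 + ‖φ n‖ where
  pos n := by positivity
  map_add_le m n := by
    rw [map_add]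
    nlinarith [norm_add_le (φ m) (φ n), mul_nonneg (norm_nonneg (φ m)) (norm_nonneg (φ n))]

namespace IsSubmultiplicativeWeight

variable {v f g : G → ℝ}

theorem rpow (hv : IsSubmultiplicativeWeight v) {b : ℝ} (hb : 0 ≤ b) :
    IsSubmultiplicativeWeight fun n => v n ^ b where
  pos n := Real.rpow_pos_of_pos (hv.pos n) b
  map_add_le m n := by
    rw [← Real.mul_rpow (hv.pos m).le (hv.pos n).le]
    exact Real.rpow_le_rpow (hv.pos _).le (hv.map_add_le m n) hb

theorem mul_sub_mul_le (hv : IsSubmultiplicativeWeight v) (hf : ∀ n, 0 ≤ f n) (hg : ∀ n, 0 ≤ g n)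
    (n m : G) :
    v n * (f (n - m) * g m) ≤ v (n - m) * f (n - m) * (v m * g m) := by
  have hsub : v n ≤ v (n - m) * v m := by simpa only [sub_add_cancel] using hv.map_add_le (n - m) m
  calc v n * (f (n - m) * g m) ≤ v (n - m) * v m * (f (n - m) * g m) :=
        mul_le_mul_of_nonneg_right hsub (mul_nonneg (hf _) (hg _))
    _ = v (n - m) * f (n - m) * (v m * g m) := mul_mul_mul_comm _ _ _ _

theorem summable_sub_mul (hv : IsSubmultiplicativeWeight v) (hf : ∀ n, 0 ≤ f n)
    (hg : ∀ n, 0 ≤ g n) (hvf : Summable fun n => v n * f n) (hvg : Summable fun n => v n * g n)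
    (n : G) : Summable fun m => f (n - m) * g m := by
  have hdom := (hasSum_prod_sub_mul hvf.norm hvg.norm).summable.prod_factor n
  have hmul : Summable fun m => v n * (f (n - m) * g m) :=
    hdom.of_nonneg_of_le (fun m => mul_nonneg (hv.pos n).le (mul_nonneg (hf _) (hg m)))
      (hv.mul_sub_mul_le hf hg n)
  exact (summable_mul_left_iff (hv.pos n).ne').1 hmul

theorem summable_mul_convolution_and_tsum_le (hv : IsSubmultiplicativeWeight v)
    (hf : ∀ n, 0 ≤ f n) (hg : ∀ n, 0 ≤ g n) (hvf : Summable fun n => v n * f n)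
    (hvg : Summable fun n => v n * g n) :
    (Summable fun n => v n * ∑' m, f (n - m) * g m) ∧
      ∑' n, v n * ∑' m, f (n - m) * g m ≤ (∑' n, v n * f n) * ∑' n, v n * g n := by
  have hprod := hasSum_prod_sub_mul hvf.norm hvg.norm
  have hle : ∀ n, v n * ∑' m, f (n - m) * g m ≤
      ∑' m, v (n - m) * f (n - m) * (v m * g m) := fun n => by
    rw [← tsum_mul_left]
    exact ((hv.summable_sub_mul hf hg hvf hvg n).mul_left _).tsum_le_tsum
      (hv.mul_sub_mul_le hf hg n) (hprod.summable.prod_factor n)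
  have hsum : Summable fun n => v n * ∑' m, f (n - m) * g m :=
    hprod.summable.prod.of_nonneg_of_le
      (fun n => mul_nonneg (hv.pos n).le (tsum_nonneg fun m => mul_nonneg (hf _) (hg m))) hle
  refine ⟨hsum, (hsum.tsum_le_tsum hle hprod.summable.prod).trans_eq ?_⟩
  rw [← hprod.summable.tsum_prod, hprod.tsum_eq]

theorem summable_sqrt_convolution_and_tsum_le (hv : IsSubmultiplicativeWeight v)
    (hf : ∀ n, 0 ≤ f n) (hv_sum : Summable fun n => (v n)⁻¹)
    (hvf : Summable fun n => v n * f n) :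
    (Summable fun n => √(∑' m, f (n - m) * f m)) ∧
      ∑' n, √(∑' m, f (n - m) * f m) ≤ √(∑' n, (v n)⁻¹) * ∑' n, v n * f n := by
  obtain ⟨hconv, hconv_le⟩ := hv.summable_mul_convolution_and_tsum_le hf hf hvf hvf
  obtain ⟨hsqrt, hsqrt_le⟩ := summable_sqrt_and_tsum_sqrt_le hv.pos
    (fun n => tsum_nonneg fun m => mul_nonneg (hf (n - m)) (hf m)) hv_sum hconv
  have hsum_nonneg : 0 ≤ ∑' n, v n * f n := tsum_nonneg fun n => mul_nonneg (hv.pos n).le (hf n)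
  refine ⟨hsqrt, hsqrt_le.trans ?_⟩
  gcongr
  rwa [Real.sqrt_le_left hsum_nonneg, sq]

end IsSubmultiplicativeWeight

end Convolution

section Lattice

theorem summable_one_add_norm_rpow {E : Type*} [NormedAddCommGroup E] [NormedSpace ℝ E]
    [FiniteDimensional ℝ E] (L : Submodule ℤ E) [DiscreteTopology L] {r : ℝ}
    (hr : r < -Module.finrank ℤ L) : Summable fun x : L => (1 + ‖x‖) ^ r := by
  have hr0 : r ≤ 0 := hr.le.trans (neg_nonpos.2 (Nat.cast_nonneg _))
  refine (ZLattice.summable_norm_rpow L r hr).of_norm_bounded_eventually ?_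
  filter_upwards [(Set.finite_singleton (0 : L)).compl_mem_cofinite] with x hx
  rw [Real.norm_of_nonneg (by positivity)]
  exact Real.rpow_le_rpow_of_nonpos (norm_pos_iff.2 hx) (le_add_of_nonneg_left zero_le_one) hr0

/-- The lattice `ℤ^d` inside `ℝ^d`, spanned over `ℤ` by the standard basis. -/
abbrev standardLattice (d : ℕ) : Submodule ℤ (EuclideanSpace ℝ (Fin d)) :=
  Submodule.span ℤ (Set.range (EuclideanSpace.basisFun (Fin d) ℝ).toBasis)

/-- The identification of integer vectors with points of `standardLattice d`, used to read
`latNorm` as the norm that the lattice inherits from `ℝ^d`. -/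
noncomputable def standardLatticeEquiv (d : ℕ) : (Fin d → ℤ) ≃ₗ[ℤ] standardLattice d :=
  ((EuclideanSpace.basisFun (Fin d) ℝ).toBasis.restrictScalars ℤ).equivFun.symm

theorem norm_standardLatticeEquiv {d : ℕ} (n : Fin d → ℤ) :
    ‖standardLatticeEquiv d n‖ = latNorm n := by
  let B := (EuclideanSpace.basisFun (Fin d) ℝ).toBasis
  have hrepr : ∀ i, (B.restrictScalars ℤ).repr (standardLatticeEquiv d n) i = n i :=
    congrFun ((B.restrictScalars ℤ).equivFun.apply_symm_apply n)
  have hcoord : ∀ i, (standardLatticeEquiv d n : EuclideanSpace ℝ (Fin d)) i = n i := fun i => by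
    rw [← hrepr i]
    exact (B.restrictScalars_repr_apply ℤ (standardLatticeEquiv d n) i).symm
  simp only [Submodule.coe_norm, EuclideanSpace.norm_eq, hcoord, latNorm, Real.norm_eq_abs, sq_abs]

theorem isSubmultiplicativeWeight_one_add_latNorm (d : ℕ) :
    IsSubmultiplicativeWeight fun n : Fin d → ℤ => 1 + latNorm n := by
  simp only [← norm_standardLatticeEquiv]
  exact isSubmultiplicativeWeight_one_add_norm_comp
    (standardLatticeEquiv d).toLinearMap.toAddMonoidHom

theorem summable_one_add_latNorm_rpow_neg (d : ℕ) {r : ℝ} (hr : d < r) :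
    Summable fun n : Fin d → ℤ => (1 + latNorm n) ^ (-r) := by
  have hrank : Module.finrank ℤ (standardLattice d) = d := by
    rw [ZLattice.rank ℝ, finrank_euclideanSpace_fin]
  have hsum := summable_one_add_norm_rpow (standardLattice d) (r := -r)
    (by rwa [hrank, neg_lt_neg_iff])
  simpa only [Function.comp_def, norm_standardLatticeEquiv] using
    hsum.comp_injective (standardLatticeEquiv d).injective

end Lattice

theorem stmt4_general {G : Type*} [AddGroup G] {w : G → ℝ} (hw : IsSubmultiplicativeWeight w)
    {κ : ℝ} (hκ : 0 ≤ κ) (hw_sum : ∀ r, κ < r → Summable fun n => w n ^ (-r))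
    {s : ℝ} (hs : 7 * κ / 2 < s) :
    ∃ C : ℝ, 0 < C ∧ ∀ h : G → ℝ, (∀ n, 0 ≤ h n) →
      (Summable fun n => w n ^ (2 * s) * h n ^ 2) →
      (∀ n, Summable fun m => √(h (n - m)) * √(h m)) ∧
      (Summable fun n => √(∑' m, √(h (n - m)) * √(h m))) ∧
      ∑' n, √(∑' m, √(h (n - m)) * √(h m)) ≤ C * √√(∑' n, w n ^ (2 * s) * h n ^ 2) := by
  obtain ⟨b, hκb, hbs⟩ : ∃ b, κ < b ∧ κ < (s / 2 - b) * (4 / 3) :=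
    ⟨(κ + (s / 2 - 3 * κ / 4)) / 2, by linarith, by linarith⟩
  have hv := hw.rpow (hκ.trans hκb.le)
  have hv_sum : Summable fun n => (w n ^ b)⁻¹ := by
    simpa only [Real.rpow_neg (hw.pos _).le] using hw_sum b hκb
  have hpos : ∀ r, κ < r → 0 < ∑' n, w n ^ (-r) := fun r hr =>
    (hw_sum r hr).tsum_pos (fun n => (Real.rpow_pos_of_pos (hw.pos n) _).le) 0
      (Real.rpow_pos_of_pos (hw.pos 0) _)
  refine ⟨√(∑' n, (w n ^ b)⁻¹) * (∑' n, w n ^ (-((s / 2 - b) * (4 / 3)))) ^ (3 / 4 : ℝ),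
    mul_pos (Real.sqrt_pos.2 ?_) (Real.rpow_pos_of_pos (hpos _ hbs) _), fun h hh hh_sum => ?_⟩
  · simpa only [Real.rpow_neg (hw.pos _).le] using hpos b hκb
  obtain ⟨hvh, hvh_le⟩ := summable_rpow_mul_sqrt_and_tsum_le hw.pos hh (hw_sum _ hbs) hh_sum
  have hsqrt_nonneg : ∀ n, 0 ≤ √(h n) := fun n => Real.sqrt_nonneg _
  obtain ⟨hconv, hconv_le⟩ := hv.summable_sqrt_convolution_and_tsum_le hsqrt_nonneg hv_sum hvh
  refine ⟨hv.summable_sub_mul hsqrt_nonneg hsqrt_nonneg hvh hvh, hconv, hconv_le.trans ?_⟩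
  rw [mul_assoc]
  gcongr

/-- For `d ≥ 1` and `s > 7d/2` there is `C = C(s, d) > 0` such that for every
`h : ℤ^d → [0, ∞)` with finite `ℓ²_s`-norm,
`∑_n (∑_m h(n−m)^{1/2} h(m)^{1/2})^{1/2} ≤ C ‖h‖_{ℓ²_s}^{1/2}`; in particular
`n ↦ ((h^{1/2} * h^{1/2})(n))^{1/2}` belongs to `ℓ¹(ℤ^d)`. -/
theorem stmt4 (d : ℕ) (hd : 1 ≤ d) (s : ℝ) (hs : 7 * (d : ℝ) / 2 < s) :
    ∃ C : ℝ, 0 < C ∧ ∀ h : (Fin d → ℤ) → ℝ, (∀ n, 0 ≤ h n) →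
      (Summable fun n : Fin d → ℤ => (1 + latNorm n) ^ (2 * s) * h n ^ 2) →
      (∀ n : Fin d → ℤ,
        Summable fun m : Fin d → ℤ => Real.sqrt (h (n - m)) * Real.sqrt (h m)) ∧
      (Summable fun n : Fin d → ℤ =>
        Real.sqrt (∑' m : Fin d → ℤ, Real.sqrt (h (n - m)) * Real.sqrt (h m))) ∧
      (∑' n : Fin d → ℤ,
          Real.sqrt (∑' m : Fin d → ℤ, Real.sqrt (h (n - m)) * Real.sqrt (h m)))
        ≤ C * Real.sqrt
            (Real.sqrt (∑' n : Fin d → ℤ, (1 + latNorm n) ^ (2 * s) * h n ^ 2)) := by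
  exact stmt4_general (isSubmultiplicativeWeight_one_add_latNorm d) d.cast_nonneg
    (fun _ => summable_one_add_latNorm_rpow_neg d) hs
end

section
/- Let V : ℤ → ℝ be bounded, and let H, A, X be the discrete Schrödinger operator, the current operator, and the position operator on ℓ²(ℤ). Then for every ψ ∈ dom X one has Hψ ∈ dom X, and the commutator identity i(H(Xψ) − X(Hψ)) = Aψ holds; that is, the current operator A equals i[H, X] on dom X. -/
open scoped ENNReal

noncomputable section

instance : Fact ((1 : ℝ≥0∞) ≤ 2) := ⟨by norm_num⟩

/-! With the translations `T k : ψ ↦ ψ (· + k)` one has `H = T (-1) + T 1 + V` and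
`A = i (T 1 - T (-1))`. Since `[T k, X] = k T k`, and `V` and `X` are both diagonal, `i[H, X] = A`
holds on arbitrary sequences. As `A` preserves `ℓ^p`, the relation `X H ψ = H X ψ + i A ψ` shows
that, for `ψ ∈ ℓ^p`, `X H ψ` belongs to `ℓ^p` exactly when `H X ψ` does. -/

section SequenceSpace

variable {α β E : Type*} [NormedAddCommGroup E] {p : ℝ≥0∞}

theorem memℓp_comp_of_injective {f : α → E} (hf : Memℓp f p) {g : β → α}
    (hg : Function.Injective g) : Memℓp (f ∘ g) p := by
  rcases p.trichotomy with rfl | rfl | hp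
  · exact memℓp_zero (hf.finite_dsupport.preimage hg.injOn)
  · exact memℓp_infty (hf.bddAbove.mono (Set.range_comp_subset_range g fun a => ‖f a‖))
  · exact (memℓp_gen_iff hp).2 ((hf.summable hp).comp_injective hg)

theorem memℓp_two_iff_summable_sq {f : α → E} : Memℓp f 2 ↔ Summable fun a => ‖f a‖ ^ 2 := by
  simpa using memℓp_gen_iff (p := 2) (f := f) (by norm_num)

end SequenceSpace

section Algebra

attribute [local instance] LieRing.ofAssociativeRing

variable (R M : Type*) [CommRing R] [AddCommGroup M] [Module R M]

/-- The translation `ψ ↦ ψ (· + k)` of two-sided sequences; for `k = ±1` these are the hopping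
terms of the discrete Schrödinger operator. -/
def translation (k : ℤ) : Module.End R (ℤ → M) :=
  LinearMap.funLeft R M (· + k)

/-- The position operator as a formal operator, defined on all two-sided sequences. A sequence `ψ`
in `ℓ^p` lies in its `ℓ^p` domain exactly when `position R M ψ` is in `ℓ^p`. -/
def position : Module.End R (ℤ → M) :=
  LinearMap.piMap fun n => (n : R) • (1 : Module.End R M)

variable {R M}

/-- The discrete Schrödinger operator with potential `V`, as a formal operator on all two-sided
sequences. The potential is operator-valued; a scalar potential `v` is encoded as
`fun n => v n • 1`. -/
def discreteSchrodinger (V : ℤ → Module.End R M) : Module.End R (ℤ → M) :=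
  translation R M (-1) + translation R M 1 + LinearMap.piMap V

@[simp]
theorem translation_apply (k : ℤ) (ψ : ℤ → M) (n : ℤ) : translation R M k ψ n = ψ (n + k) :=
  rfl

@[simp]
theorem position_apply (ψ : ℤ → M) (n : ℤ) : position R M ψ n = (n : R) • ψ n :=
  rfl

theorem lie_translation_position (k : ℤ) :
    ⁅translation R M k, position R M⁆ = (k : R) • translation R M k := by
  ext1 ψ
  funext n
  simp [Ring.lie_def, add_smul]

theorem lie_piMap_position (V : ℤ → Module.End R M) : ⁅LinearMap.piMap V, position R M⁆ = 0 := by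
  ext1 ψ
  funext n
  simp [Ring.lie_def]

theorem lie_discreteSchrodinger_position (V : ℤ → Module.End R M) :
    ⁅discreteSchrodinger V, position R M⁆ = translation R M 1 - translation R M (-1) := by
  simp only [discreteSchrodinger, add_lie, lie_translation_position, lie_piMap_position]
  module

end Algebra

section Current

variable (E : Type*) [AddCommGroup E] [Module ℂ E]

/-- The current operator as a formal operator on all two-sided sequences; it is the time derivative
`i[H, X]` of the position for every potential. -/
def current : Module.End ℂ (ℤ → E) :=
  Complex.I • (translation ℂ E 1 - translation ℂ E (-1))

variable {E}

theorem I_smul_lie_discreteSchrodinger_position (V : ℤ → Module.End ℂ E) :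
    Complex.I • ⁅discreteSchrodinger V, position ℂ E⁆ = current E := by
  rw [lie_discreteSchrodinger_position, current]

theorem I_smul_discreteSchrodinger_position_sub (V : ℤ → Module.End ℂ E) (ψ : ℤ → E) :
    Complex.I • (discreteSchrodinger V (position ℂ E ψ) - position ℂ E (discreteSchrodinger V ψ)) =
      current E ψ :=
  LinearMap.congr_fun (I_smul_lie_discreteSchrodinger_position V) ψ

theorem position_discreteSchrodinger (V : ℤ → Module.End ℂ E) (ψ : ℤ → E) :
    position ℂ E (discreteSchrodinger V ψ) =
      discreteSchrodinger V (position ℂ E ψ) + Complex.I • current E ψ := by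
  rw [← I_smul_discreteSchrodinger_position_sub V, smul_smul, Complex.I_mul_I, neg_one_smul]
  abel

end Current

section Domain

variable {E : Type*} [NormedAddCommGroup E] [NormedSpace ℂ E] {p : ℝ≥0∞} {ψ : ℤ → E}

theorem memℓp_translation (hψ : Memℓp ψ p) (k : ℤ) : Memℓp (translation ℂ E k ψ) p :=
  memℓp_comp_of_injective hψ (add_left_injective k)

theorem memℓp_current (hψ : Memℓp ψ p) : Memℓp (current E ψ) p :=
  ((memℓp_translation hψ 1).sub (memℓp_translation hψ (-1))).const_smul Complex.I

theorem memℓp_position_discreteSchrodinger_iff (V : ℤ → Module.End ℂ E) (hψ : Memℓp ψ p) :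
    Memℓp (position ℂ E (discreteSchrodinger V ψ)) p ↔
      Memℓp (discreteSchrodinger V (position ℂ E ψ)) p := by
  have hcurrent : Memℓp (Complex.I • current E ψ) p := (memℓp_current hψ).const_smul Complex.I
  rw [position_discreteSchrodinger]
  exact ⟨fun h => by simpa only [add_sub_cancel_right] using h.sub hcurrent,
    fun h => h.add hcurrent⟩

theorem memℓp_two_position_iff :
    Memℓp (position ℂ E ψ) 2 ↔ Summable fun n : ℤ => (n : ℝ) ^ 2 * ‖ψ n‖ ^ 2 := by
  simp only [memℓp_two_iff_summable_sq, position_apply, norm_smul, Complex.norm_intCast, mul_pow,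
    sq_abs]

theorem stmt10_general (V : ℤ → Module.End ℂ E) (hψ : Memℓp ψ p) :
    (Memℓp (position ℂ E (discreteSchrodinger V ψ)) p ↔
      Memℓp (discreteSchrodinger V (position ℂ E ψ)) p) ∧
    Complex.I • (discreteSchrodinger V (position ℂ E ψ) - position ℂ E (discreteSchrodinger V ψ)) =
      current E ψ :=
  ⟨memℓp_position_discreteSchrodinger_iff V hψ, I_smul_discreteSchrodinger_position_sub V ψ⟩

end Domain

/-- Let `V : ℤ → ℝ` be bounded, and `H`, `A`, `X` the discrete Schrödinger
operator, the current operator, and the position operator on `ℓ²(ℤ)`. For every `ψ ∈ dom X`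
one has `Hψ ∈ dom X`, and the commutator identity `i(H(Xψ) − X(Hψ)) = Aψ` holds, i.e. the
current operator `A` equals `i[H, X]` on `dom X`. -/
theorem stmt10 (V : ℤ → ℝ) (hV : ∃ M : ℝ, ∀ n : ℤ, |V n| ≤ M)
    (H A : lp (fun _ : ℤ => ℂ) 2 →L[ℂ] lp (fun _ : ℤ => ℂ) 2)
    (hH : ∀ (ψ : lp (fun _ : ℤ => ℂ) 2) (n : ℤ),
      (H ψ) n = ψ (n - 1) + ψ (n + 1) + (V n : ℂ) * ψ n)
    (hA : ∀ (ψ : lp (fun _ : ℤ => ℂ) 2) (n : ℤ),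
      (A ψ) n = Complex.I * (ψ (n + 1) - ψ (n - 1)))
    (ψ Xψ : lp (fun _ : ℤ => ℂ) 2)
    (hdom : Summable fun n : ℤ => (n : ℝ) ^ 2 * ‖ψ n‖ ^ 2)
    (hXψ : ∀ n : ℤ, Xψ n = (n : ℂ) * ψ n) :
    (Summable fun n : ℤ => (n : ℝ) ^ 2 * ‖(H ψ) n‖ ^ 2) ∧
    ∀ n : ℤ, Complex.I * ((H Xψ) n - (n : ℂ) * (H ψ) n) = (A ψ) n := by
  let U : ℤ → Module.End ℂ ℂ := fun n => (V n : ℂ) • 1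
  have hH_eq (φ : lp (fun _ : ℤ => ℂ) 2) : ⇑(H φ) = discreteSchrodinger U φ := funext (hH φ)
  have hX_eq : ⇑Xψ = position ℂ ℂ ψ := funext hXψ
  have hA_eq : ⇑(A ψ) = current ℂ ψ := funext (hA ψ)
  obtain ⟨hmem, hcomm⟩ := stmt10_general U (lp.memℓp ψ)
  rw [← hX_eq, ← hH_eq, ← hH_eq] at hmem hcomm
  rw [← hA_eq] at hcomm
  exact ⟨memℓp_two_position_iff.1 (hmem.2 (lp.memℓp (H Xψ))), congr_fun hcomm⟩
end
end
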